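/- For REL(Z_n × Z_4, {(1,0),(0,1)}) with n ≥ 3: Player 1 has a winning strategy if n ≡ ±1 (mod 4), and Player 2 has a winning strategy if n ≡ 0 (mod 4) or n ≡ 2 (mod 4). -/

import Mathlib

namespace RelatorGames

variable {G : Type*} [Group G]

/-- The letters available in the relator games: elements of `S` and their inverses. -/
def letters (S : Set G) : Set G := S ∪ (fun g => g⁻¹) '' S

/-- Evaluate a history of moves (most recent letter first) to a group element:
the group element represented by the word built so far. -/
def eval (h : List G) : G := h.reverse.prod

/-- A move `m` is legal after history `h`: it is a letter of `S ∪ S⁻¹` and it is not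
the inverse of the immediately preceding letter (no backtracking). -/
def LegalMove (S : Set G) (h : List G) (m : G) : Prop :=
  m ∈ letters S ∧ ∀ p ∈ h.head?, m ≠ p⁻¹

/-- Appending `m` to the history `h` produces a word equal in `G` to some earlier
prefix of the word (equivalently, the walk in the Cayley graph revisits a vertex). -/
def ClosesCycle (h : List G) (m : G) : Prop :=
  ∃ t, t <:+ h ∧ eval t = eval (m :: h)

/-- A strategy: a choice of next letter given the history (most recent letter first). -/
abbrev Strategy (G : Type*) := List G → G

/-- The sequence of histories arising when the first player (moving at even steps)
uses `σ` and the second player (moving at odd steps) uses `τ`. -/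
def hist (σ τ : Strategy G) : ℕ → List G
  | 0 => []
  | k + 1 =>
      (if k % 2 = 0 then σ (hist σ τ k) else τ (hist σ τ k)) :: hist σ τ k

/-- The move made at step `k` in the play of `σ` against `τ`. -/
def moveAt (σ τ : Strategy G) (k : ℕ) : G :=
  if k % 2 = 0 then σ (hist σ τ k) else τ (hist σ τ k)

/-- Step `j` is uneventful: the move made is legal and does not close a cycle. -/
def Ok (S : Set G) (σ τ : Strategy G) (j : ℕ) : Prop :=
  LegalMove S (hist σ τ j) (moveAt σ τ j) ∧ ¬ ClosesCycle (hist σ τ j) (moveAt σ τ j)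

/-- In the play of `σ` against `τ`, the player moving at steps congruent to `p` mod 2
wins the relator achievement game `REL(G,S)`: at the first eventful step, either it is
that player's turn and they legally close a cycle, or it is the opponent's turn and the
opponent has made an illegal move (in particular, has no legal move). -/
def RelWins (S : Set G) (p : ℕ) (σ τ : Strategy G) : Prop :=
  ∃ k : ℕ, (∀ j < k, Ok S σ τ j) ∧
    ((k % 2 = p ∧ LegalMove S (hist σ τ k) (moveAt σ τ k) ∧
        ClosesCycle (hist σ τ k) (moveAt σ τ k)) ∨
      (k % 2 ≠ p ∧ ¬ LegalMove S (hist σ τ k) (moveAt σ τ k)))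

/-- In the play of `σ` against `τ`, the player moving at steps congruent to `p` mod 2
wins the relator avoidance game `RAV(G,S)`: at the first eventful step it is the
opponent's turn, and the opponent either makes an illegal move (in particular, has no
legal move) or closes a cycle. -/
def RavWins (S : Set G) (p : ℕ) (σ τ : Strategy G) : Prop :=
  ∃ k : ℕ, (∀ j < k, Ok S σ τ j) ∧ k % 2 ≠ p ∧
    (¬ LegalMove S (hist σ τ k) (moveAt σ τ k) ∨ ClosesCycle (hist σ τ k) (moveAt σ τ k))

/-- Player 1 has a winning strategy for `REL(G,S)`. -/
def FirstWinsREL (S : Set G) : Prop :=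
  ∃ σ : Strategy G, ∀ τ : Strategy G, RelWins S 0 σ τ

/-- Player 2 has a winning strategy for `REL(G,S)`. -/
def SecondWinsREL (S : Set G) : Prop :=
  ∃ τ : Strategy G, ∀ σ : Strategy G, RelWins S 1 σ τ

/-- Player 1 has a winning strategy for `RAV(G,S)`. -/
def FirstWinsRAV (S : Set G) : Prop :=
  ∃ σ : Strategy G, ∀ τ : Strategy G, RavWins S 0 σ τ

/-- Player 2 has a winning strategy for `RAV(G,S)`. -/
def SecondWinsRAV (S : Set G) : Prop :=
  ∃ τ : Strategy G, ∀ σ : Strategy G, RavWins S 1 σ τ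

end RelatorGames

namespace RelatorGames

/-- The opponent is to move at `h` and I can win within `N` rounds. -/
def Good {G : Type*} [Group G] (S : Set G) : ℕ → List G → Prop
  | 0, _ => False
  | N + 1, h => ∀ m, LegalMove S h m → ¬ ClosesCycle h m ∧
      ∃ r, LegalMove S (m :: h) r ∧ (ClosesCycle (m :: h) r ∨ Good S N (r :: m :: h))

open Classical in
/-- The generic winning strategy. -/
noncomputable def strat {G : Type*} [Group G] (S : Set G) : Strategy G := fun h =>
  if hc : ∃ r, LegalMove S h r ∧ ClosesCycle h r then hc.choose
  else if hg : ∃ N r, LegalMove S h r ∧ Good S N (r :: h) then (Nat.find_spec hg).choose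
  else 1

theorem strat_close {G : Type*} [Group G] (S : Set G) (h : List G)
    (hc : ∃ r, LegalMove S h r ∧ ClosesCycle h r) :
    LegalMove S h (strat S h) ∧ ClosesCycle h (strat S h) := by
  classical
  unfold strat
  rw [dif_pos hc]
  exact hc.choose_spec

theorem strat_good {G : Type*} [Group G] (S : Set G) (h : List G) (N : ℕ) (r : G)
    (hc : ¬ ∃ r, LegalMove S h r ∧ ClosesCycle h r)
    (hl : LegalMove S h r) (hr : Good S N (r :: h)) :
    ∃ M ≤ N, LegalMove S h (strat S h) ∧ Good S M (strat S h :: h) := by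
  classical
  have hg : ∃ N r, LegalMove S h r ∧ Good S N (r :: h) := ⟨N, r, hl, hr⟩
  refine ⟨Nat.find hg, Nat.find_min' hg ⟨r, hl, hr⟩, ?_⟩
  have : strat S h = (Nat.find_spec hg).choose := by
    unfold strat
    rw [dif_neg hc, dif_pos hg]
  rw [this]
  exact (Nat.find_spec hg).choose_spec

theorem hist_succ {G : Type*} [Group G] (σ τ : Strategy G) (k : ℕ) :
    hist σ τ (k + 1) = moveAt σ τ k :: hist σ τ k := by
  simp [hist, moveAt]

theorem own_turn {G : Type*} [Group G] (S : Set G) (p : ℕ) (σ τ : Strategy G)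
    (hp : p < 2) (hmv : ∀ k, k % 2 = p → moveAt σ τ k = strat S (hist σ τ k)) (N : ℕ) :
    ∀ k, k % 2 = p → (∀ j < k, Ok S σ τ j) →
    (∃ r, LegalMove S (hist σ τ k) r ∧
      (ClosesCycle (hist σ τ k) r ∨ Good S N (r :: hist σ τ k))) →
    RelWins S p σ τ := by
  induction N using Nat.strong_induction_on with
  | _ N ih =>
  intro k hk hok ⟨r, hl, hr⟩
  by_cases hc : ∃ r, LegalMove S (hist σ τ k) r ∧ ClosesCycle (hist σ τ k) r
  · refine ⟨k, hok, Or.inl ⟨hk, ?_⟩⟩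
    rw [hmv k hk]
    exact strat_close S _ hc
  · have hr' : Good S N (r :: hist σ τ k) := hr.resolve_left fun h => hc ⟨r, hl, h⟩
    obtain ⟨M, hM, hL, hG⟩ := strat_good S _ N r hc hl hr'
    rw [← hmv k hk, ← hist_succ] at hG
    rw [← hmv k hk] at hL
    have hok1 : ∀ j < k + 1, Ok S σ τ j := by
      intro j hj
      rcases Nat.lt_succ_iff_lt_or_eq.1 hj with h | h
      · exact hok j h
      · subst h
        exact ⟨hL, fun h => hc ⟨_, hL, h⟩⟩
    cases M with
    | zero => exact absurd hG (by simp [Good])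
    | succ M =>
      by_cases hleg : LegalMove S (hist σ τ (k+1)) (moveAt σ τ (k+1))
      · obtain ⟨hnc, hex⟩ := hG _ hleg
        rw [← hist_succ] at hex
        refine ih M (by omega) (k + 1 + 1) (by omega) ?_ hex
        intro j hj
        rcases Nat.lt_succ_iff_lt_or_eq.1 hj with h | h
        · exact hok1 j h
        · subst h
          exact ⟨hleg, hnc⟩
      · exact ⟨k + 1, hok1, Or.inr ⟨by omega, hleg⟩⟩

theorem first_wins {G : Type*} [Group G] (S : Set G) (N : ℕ) (r : G)
    (hl : LegalMove S [] r) (hg : Good S N [r]) : FirstWinsREL S := by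
  refine ⟨strat S, fun τ => own_turn S 0 _ τ (by omega) ?_ N 0 rfl (by simp) ?_⟩
  · intro k hk
    simp [moveAt, hk]
  · exact ⟨r, hl, Or.inr hg⟩

theorem second_wins {G : Type*} [Group G] (S : Set G) (N : ℕ)
    (hg : Good S N []) : SecondWinsREL S := by
  refine ⟨strat S, fun σ => ?_⟩
  cases N with
  | zero => exact absurd hg (by simp [Good])
  | succ N =>
    by_cases hleg : LegalMove S [] (moveAt σ (strat S) 0)
    · obtain ⟨hnc, hex⟩ := hg _ hleg
      refine own_turn S 1 σ _ (by omega) ?_ N 1 rfl ?_ hex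
      · intro k hk
        simp [moveAt, hk]
      · intro j hj
        obtain rfl : j = 0 := by omega
        exact ⟨hleg, hnc⟩
    · exact ⟨0, by simp, Or.inr ⟨by omega, hleg⟩⟩

/-- Visited vertices. -/
def Vis {G : Type*} [Group G] (h : List G) (v : G) : Prop := ∃ t, t <:+ h ∧ eval t = v

theorem eval_cons {G : Type*} [Group G] (m : G) (h : List G) :
    eval (m :: h) = eval h * m := by simp [eval]

theorem vis_nil {G : Type*} [Group G] (v : G) : Vis [] v ↔ v = 1 := by
  simp [Vis, eval, eq_comm]

theorem vis_cons {G : Type*} [Group G] (m : G) (h : List G) (v : G) :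
    Vis (m :: h) v ↔ v = eval h * m ∨ Vis h v := by
  unfold Vis
  simp only [List.suffix_cons_iff, or_and_right, exists_or, exists_eq_left, eval_cons]
  simp only [eq_comm]

theorem vis_one {G : Type*} [Group G] (h : List G) : Vis h (1 : G) :=
  ⟨[], List.nil_suffix, by simp [eval]⟩

theorem vis_self {G : Type*} [Group G] (h : List G) : Vis h (eval h) :=
  ⟨h, List.suffix_rfl, rfl⟩

theorem closes_iff {G : Type*} [Group G] (h : List G) (m : G) :
    ClosesCycle h m ↔ Vis h (eval h * m) := by
  unfold ClosesCycle Vis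
  rw [eval_cons]

/-- The two generators and their relations. -/
structure Setup {G : Type*} [CommGroup G] (S : Set G) (n : ℤ) (x y : G) : Prop where
  rel : ∀ i j : ℤ, x ^ i * y ^ j = 1 ↔ n ∣ i ∧ (4 : ℤ) ∣ j
  lett : ∀ m, m ∈ letters S ↔ m = x ∨ m = x⁻¹ ∨ m = y ∨ m = y⁻¹
  hn : 3 ≤ n

variable {G : Type*} [CommGroup G] {S : Set G} {n : ℤ} {x y : G}

theorem Setup.invx (H : Setup S n x y) : Setup S n x⁻¹ y where
  rel i j := by
    have := H.rel (-i) j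
    rw [zpow_neg, ← inv_zpow] at this
    simpa using this
  lett m := by rw [H.lett, inv_inv]; tauto
  hn := H.hn

theorem Setup.invy (H : Setup S n x y) : Setup S n x y⁻¹ where
  rel i j := by
    have := H.rel i (-j)
    rw [zpow_neg, ← inv_zpow] at this
    simpa using this
  lett m := by rw [H.lett, inv_inv]; tauto
  hn := H.hn

theorem Setup.eq_iff (H : Setup S n x y) (i j s t : ℤ) :
    x ^ i * y ^ j = x ^ s * y ^ t ↔ n ∣ i - s ∧ (4 : ℤ) ∣ j - t := by
  rw [← H.rel, zpow_sub, zpow_sub, ← div_eq_one, div_eq_mul_inv, mul_inv]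
  rw [mul_mul_mul_comm]

theorem dvd_small {n e : ℤ} (h : n ∣ e) (h1 : e < 3 * n) (h2 : -(3 * n) < e) :
    e = 0 ∨ e = n ∨ e = -n ∨ e = 2 * n ∨ e = -(2 * n) := by
  obtain ⟨k, rfl⟩ := h
  have hn : 0 < n := by omega
  have h3 : k < 3 := by nlinarith
  have h4 : -3 < k := by nlinarith
  have : k = -2 ∨ k = -1 ∨ k = 0 ∨ k = 1 ∨ k = 2 := by omega
  rcases this with rfl | rfl | rfl | rfl | rfl <;> omega

/-- The five kinds of parameters: diagonal starts at `(c,d)`, ends at step `J`. -/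
def Par (n c d J : ℤ) : Prop :=
  (n % 4 = 0 ∧ c = 0 ∧ d = 0 ∧ J = n) ∨ (n % 4 = 1 ∧ c = 1 ∧ d = 0 ∧ J = n - 1) ∨
  (n % 4 = 2 ∧ c = 2 ∧ d = 0 ∧ J = n - 2) ∨ (n % 4 = 2 ∧ c = 0 ∧ d = 2 ∧ J = n) ∨
  (n % 4 = 3 ∧ c = 0 ∧ d = 1 ∧ J = n)

/-- Coordinates that may have been visited. -/
def WeakC (c d j s t : ℤ) : Prop :=
  (t = 0 ∧ 0 ≤ s ∧ s < c) ∨ (s = 0 ∧ 0 ≤ t ∧ t < d) ∨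
  ∃ i : ℤ, 0 ≤ i ∧ ((i ≤ j ∧ s = c + i ∧ t = d + i) ∨ (i < j ∧ s = c + i + 1 ∧ t = d + i) ∨
    (i < j ∧ (d = 2 → 1 ≤ i) ∧ s = c + i ∧ t = d + i + 1))

theorem arith {n c d J j s t k l : ℤ} (hn : 3 ≤ n) (hP : Par n c d J) (hj : 1 ≤ j) (hJ : j < J)
    (hkl : (k = 1 ∧ l = 0) ∨ (k = -1 ∧ l = 0) ∨ (k = 0 ∧ l = 1) ∨ (k = 0 ∧ l = -1))
    (hW : WeakC c d (j - 1) s t) (h1 : n ∣ c + j + k - s) (h2 : (4 : ℤ) ∣ d + j + l - t) :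
    False := by
  rcases hW with ⟨h, h', h''⟩ | ⟨h, h', h''⟩ | ⟨i, hi, hW⟩
  · subst h
    have := dvd_small h1 (by unfold Par at hP; omega) (by unfold Par at hP; omega)
    unfold Par at hP; omega
  · subst h
    have := dvd_small h1 (by unfold Par at hP; omega) (by unfold Par at hP; omega)
    unfold Par at hP; omega
  · rcases hW with ⟨h, rfl, rfl⟩ | ⟨h, rfl, rfl⟩ | ⟨h, h', rfl, rfl⟩
    · have := dvd_small h1 (by unfold Par at hP; omega) (by unfold Par at hP; omega)
      unfold Par at hP; omega
    · have := dvd_small h1 (by unfold Par at hP; omega) (by unfold Par at hP; omega)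
      unfold Par at hP; omega
    · have := dvd_small h1 (by unfold Par at hP; omega) (by unfold Par at hP; omega)
      unfold Par at hP; omega

theorem par_end {n c d J : ℤ} (hP : Par n c d J) : n ∣ c + J ∧ (4 : ℤ) ∣ d + J := by
  rcases hP with ⟨h, rfl, rfl, rfl⟩ | ⟨h, rfl, rfl, rfl⟩ | ⟨h, rfl, rfl, rfl⟩ |
    ⟨h, rfl, rfl, rfl⟩ | ⟨h, rfl, rfl, rfl⟩ <;> refine ⟨?_, by omega⟩ <;> simp

/-- All visited vertices are within the weak description. -/
def WeakV (x y : G) (c d j : ℤ) (h : List G) : Prop :=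
  eval h = x ^ (c + j) * y ^ (d + j) ∧
  ∀ v, Vis h v → ∃ s t : ℤ, v = x ^ s * y ^ t ∧ WeakC c d j s t

theorem weakV_step {c d j : ℤ} {h : List G} {m r : G} (hj : 1 ≤ j)
    (hmr : (m = x ∧ r = y) ∨ (m = y ∧ r = x)) (hd : d = 2 → j = 1 → m = x)
    (hxy : x ≠ y)
    (hW : WeakV x y c d (j - 1) h) : WeakV x y c d j (r :: m :: h) := by
  obtain ⟨he, hv⟩ := hW
  have hev : eval (r :: m :: h) = x ^ (c + j) * y ^ (d + j) := by
    rw [eval_cons, eval_cons, he]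
    have e1 : c + j = c + (j - 1) + 1 := by ring
    have e2 : d + j = d + (j - 1) + 1 := by ring
    rw [e1, e2, zpow_add_one, zpow_add_one]
    rcases hmr with ⟨rfl, rfl⟩ | ⟨rfl, rfl⟩
    · rw [mul_assoc, mul_mul_mul_comm]
    · rw [mul_assoc, mul_comm m r, mul_mul_mul_comm]
  refine ⟨hev, fun v hvis => ?_⟩
  rw [vis_cons, vis_cons, ← eval_cons, ← eval_cons, hev] at hvis
  rcases hvis with rfl | rfl | hvis
  · exact ⟨_, _, rfl, Or.inr (Or.inr ⟨j, by omega, Or.inl ⟨le_rfl, rfl, rfl⟩⟩)⟩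
  · rw [eval_cons, he]
    rcases hmr with ⟨rfl, rfl⟩ | ⟨rfl, rfl⟩
    · refine ⟨c + (j - 1) + 1, d + (j - 1), ?_, Or.inr (Or.inr ⟨j - 1, by omega, ?_⟩)⟩
      · rw [zpow_add_one, mul_right_comm]
      · exact Or.inr (Or.inl ⟨by omega, rfl, rfl⟩)
    · refine ⟨c + (j - 1), d + (j - 1) + 1, ?_, Or.inr (Or.inr ⟨j - 1, by omega, ?_⟩)⟩
      · rw [zpow_add_one, mul_assoc]
      · refine Or.inr (Or.inr ⟨by omega, fun h2 => ?_, rfl, rfl⟩)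
        by_contra h3
        exact hxy (hd h2 (by omega)).symm
  · obtain ⟨s, t, hst, hw⟩ := hv v hvis
    refine ⟨s, t, hst, ?_⟩
    rcases hw with hw | hw | ⟨i, hi, hw⟩
    · exact Or.inl hw
    · exact Or.inr (Or.inl hw)
    · refine Or.inr (Or.inr ⟨i, hi, ?_⟩)
      omega

theorem Setup.ne_of (H : Setup S n x y) (i j : ℤ) (h : ¬ (n ∣ i ∧ (4 : ℤ) ∣ j)) :
    x ^ i * y ^ j ≠ 1 := fun h' => h ((H.rel i j).1 h')

theorem not_dvd_one (H : Setup S n x y) : ¬ n ∣ 1 := by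
  intro h
  have := Int.le_of_dvd (by norm_num) h
  have := H.hn
  omega

theorem not_dvd_two (H : Setup S n x y) : ¬ n ∣ 2 := by
  intro h
  have := Int.le_of_dvd (by norm_num) h
  have := H.hn
  omega

theorem Setup.ne (H : Setup S n x y) : x ≠ y := by
  intro h
  have := H.ne_of 1 (-1) (by omega)
  exact this (by simp [h])

theorem Setup.mul_ne (H : Setup S n x y) : x * y ≠ 1 := by
  have := H.ne_of 1 1 (by omega)
  simpa using this

theorem Setup.x_ne (H : Setup S n x y) : x ≠ 1 := by
  have := H.ne_of 1 0 (fun h => not_dvd_one H h.1)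
  simpa using this

theorem Setup.y_ne (H : Setup S n x y) : y ≠ 1 := by
  have := H.ne_of 0 1 (by omega)
  simpa using this

theorem Setup.xx_ne (H : Setup S n x y) : x * x ≠ 1 := by
  have := H.ne_of 2 0 (fun h => not_dvd_two H h.1)
  simpa [zpow_ofNat, pow_two] using this

theorem Setup.yy_ne (H : Setup S n x y) : y * y ≠ 1 := by
  have := H.ne_of 0 2 (by omega)
  simpa [zpow_ofNat, pow_two] using this

theorem legal_cons (p : G) (h : List G) (m : G) :
    LegalMove S (p :: h) m ↔ m ∈ letters S ∧ p * m ≠ 1 := by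
  unfold LegalMove
  simp only [List.head?_cons, Option.mem_def, Option.some.injEq, forall_eq', ne_eq,
    mul_eq_one_iff_eq_inv']

theorem diag_good (H : Setup S n x y) {c d J : ℤ} (hP : Par n c d J) (N : ℕ) :
    ∀ (j : ℤ) (h : List G) (m r : G), 1 ≤ j → j + N = J → 1 ≤ N →
    ((m = x ∧ r = y) ∨ (m = y ∧ r = x)) → (d = 2 → j = 1 → m = x) →
    WeakV x y c d (j - 1) h → Good S N (r :: m :: h) := by
  induction N with
  | zero => intro j h m r _ _ h0; omega
  | succ N ih =>
  intro j h m r hj hJ _ hmr hd hW k hk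
  have hW' := weakV_step hj hmr hd H.ne hW
  rw [legal_cons] at hk
  obtain ⟨hkS, hkr⟩ := hk
  rw [H.lett] at hkS
  have hk1 : k ≠ 1 := by
    rcases hkS with rfl | rfl | rfl | rfl
    · exact H.x_ne
    · exact H.invx.x_ne
    · exact H.y_ne
    · exact H.invy.y_ne
  push_cast at hJ
  refine ⟨?_, ?_⟩
  · rw [closes_iff, vis_cons, vis_cons]
    rintro (hv | hv | hv)
    · rw [eval_cons _ (m :: h)] at hv
      exact hk1 (by simpa using hv)
    · rw [eval_cons, eval_cons, mul_assoc] at hv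
      exact hkr (by simpa using hv)
    · obtain ⟨s, t, hst, hw⟩ := hW.2 _ hv
      rw [hW'.1] at hst
      have key : ∃ a b : ℤ, k = x ^ a * y ^ b ∧
          ((a = 1 ∧ b = 0) ∨ (a = -1 ∧ b = 0) ∨ (a = 0 ∧ b = 1) ∨ (a = 0 ∧ b = -1)) := by
        rcases hkS with rfl | rfl | rfl | rfl
        · exact ⟨1, 0, by simp, by simp⟩
        · exact ⟨-1, 0, by simp, by simp⟩
        · exact ⟨0, 1, by simp, by simp⟩
        · exact ⟨0, -1, by simp, by simp⟩
      obtain ⟨a, b, rfl, hab⟩ := key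
      rw [mul_mul_mul_comm, ← zpow_add, ← zpow_add, H.eq_iff] at hst
      exact arith H.hn hP hj (by omega) hab hw hst.1 hst.2
  · have hfw : ∀ r' : G, ((k = x ∧ r' = y) ∨ (k = y ∧ r' = x)) →
        LegalMove S (k :: r :: m :: h) r' ∧ (ClosesCycle (k :: r :: m :: h) r' ∨
          Good S N (r' :: k :: r :: m :: h)) := by
      intro r' hr'
      refine ⟨?_, ?_⟩
      · rw [legal_cons, H.lett]
        rcases hr' with ⟨rfl, rfl⟩ | ⟨rfl, rfl⟩
        · exact ⟨by simp, H.mul_ne⟩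
        · exact ⟨by simp, by rw [mul_comm]; exact H.mul_ne⟩
      · have hW2 : WeakV x y c d (j + 1 - 1) (r :: m :: h) := by
          rwa [add_sub_cancel_right]
        by_cases hN : N = 0
        · left
          have := weakV_step (j := j + 1) (by omega) hr' (by omega) H.ne hW2
          rw [closes_iff, ← eval_cons, this.1]
          subst hN
          have e : j + 1 = J := by push_cast at hJ; omega
          rw [e, (H.rel _ _).2 (par_end hP)]
          exact vis_one _
        · right
          exact ih (j + 1) _ _ _ (by omega) (by omega) (by omega) hr' (by omega) hW2
    have hbw : ∀ r' : G, ((k = x⁻¹ ∧ r' = y⁻¹) ∨ (k = y⁻¹ ∧ r' = x⁻¹)) →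
        LegalMove S (k :: r :: m :: h) r' ∧ (ClosesCycle (k :: r :: m :: h) r' ∨
          Good S N (r' :: k :: r :: m :: h)) := by
      intro r' hr'
      refine ⟨?_, Or.inl ?_⟩
      · rw [legal_cons, H.lett]
        rcases hr' with ⟨rfl, rfl⟩ | ⟨rfl, rfl⟩
        · exact ⟨by simp, H.invx.invy.mul_ne⟩
        · exact ⟨by simp, by rw [mul_comm]; exact H.invx.invy.mul_ne⟩
      · rw [closes_iff]
        have : eval (k :: r :: m :: h) * r' = eval h := by
          simp only [eval_cons]
          have : m * r * k * r' = 1 := by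
            rcases hr' with ⟨rfl, rfl⟩ | ⟨rfl, rfl⟩ <;>
              rcases hmr with ⟨rfl, rfl⟩ | ⟨rfl, rfl⟩ <;> simp [mul_comm]
          calc eval h * m * r * k * r' = eval h * (m * r * k * r') := by
                simp only [mul_assoc]
            _ = eval h := by rw [this, mul_one]
        rw [this, vis_cons, vis_cons, vis_cons]
        exact Or.inr (Or.inr (Or.inr (vis_self h)))
    rcases hkS with h1 | h1 | h1 | h1
    · exact ⟨y, hfw y (Or.inl ⟨h1, rfl⟩)⟩
    · exact ⟨y⁻¹, hbw _ (Or.inl ⟨h1, rfl⟩)⟩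
    · exact ⟨x, hfw x (Or.inr ⟨h1, rfl⟩)⟩
    · exact ⟨x⁻¹, hbw _ (Or.inr ⟨h1, rfl⟩)⟩

/-- First reply that enters the diagonal. -/
theorem enter (H : Setup S n x y) {c d J : ℤ} (hP : Par n c d J) (h : List G) (m r : G)
    (hmr : (m = x ∧ r = y) ∨ (m = y ∧ r = x)) (hd : d = 2 → m = x)
    (hW : WeakV x y c d 0 h) :
    LegalMove S (m :: h) r ∧ (ClosesCycle (m :: h) r ∨
      Good S (J - 1).toNat (r :: m :: h)) := by
  have hn := H.hn
  refine ⟨?_, Or.inr ?_⟩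
  · rw [legal_cons, H.lett]
    rcases hmr with ⟨rfl, rfl⟩ | ⟨rfl, rfl⟩
    · exact ⟨by simp, H.mul_ne⟩
    · exact ⟨by simp, by rw [mul_comm]; exact H.mul_ne⟩
  · have hJ : 2 ≤ J := by unfold Par at hP; omega
    exact diag_good H hP _ 1 h m r le_rfl (by omega) (by omega) hmr (fun h _ => hd h) hW

theorem weak_nil : WeakV x y 0 0 0 ([] : List G) := by
  refine ⟨by simp [eval], fun v hv => ?_⟩
  rw [vis_nil] at hv
  exact ⟨0, 0, by simp [hv], Or.inr (Or.inr ⟨0, by simp⟩)⟩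

theorem weak_x : WeakV x y 1 0 0 [x] := by
  refine ⟨by simp [eval], fun v hv => ?_⟩
  rw [vis_cons, vis_nil] at hv
  rcases hv with rfl | rfl
  · exact ⟨1, 0, by simp [eval], Or.inr (Or.inr ⟨0, by simp⟩)⟩
  · exact ⟨0, 0, by simp, Or.inl (by simp)⟩

theorem weak_y : WeakV x y 0 1 0 [y] := by
  refine ⟨by simp [eval], fun v hv => ?_⟩
  rw [vis_cons, vis_nil] at hv
  rcases hv with rfl | rfl
  · exact ⟨0, 1, by simp [eval], Or.inr (Or.inr ⟨0, by simp⟩)⟩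
  · exact ⟨0, 0, by simp, Or.inr (Or.inl (by simp))⟩

theorem weak_xx : WeakV x y 2 0 0 [x, x] := by
  refine ⟨by simp [eval, zpow_ofNat, pow_two], fun v hv => ?_⟩
  rw [vis_cons, vis_cons, vis_nil] at hv
  rcases hv with rfl | rfl | rfl
  · exact ⟨2, 0, by simp [eval, zpow_ofNat, pow_two], Or.inr (Or.inr ⟨0, by simp⟩)⟩
  · exact ⟨1, 0, by simp [eval], Or.inl (by simp)⟩
  · exact ⟨0, 0, by simp, Or.inl (by simp)⟩

theorem weak_yy : WeakV x y 0 2 0 [y, y] := by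
  refine ⟨by simp [eval, zpow_ofNat, pow_two], fun v hv => ?_⟩
  rw [vis_cons, vis_cons, vis_nil] at hv
  rcases hv with rfl | rfl | rfl
  · exact ⟨0, 2, by simp [eval, zpow_ofNat, pow_two], Or.inr (Or.inr ⟨0, by simp⟩)⟩
  · exact ⟨0, 1, by simp [eval], Or.inr (Or.inl (by simp))⟩
  · exact ⟨0, 0, by simp, Or.inr (Or.inl (by simp))⟩

theorem Setup.letter_ne (H : Setup S n x y) {k : G} (hk : k ∈ letters S) : k ≠ 1 := by
  rw [H.lett] at hk
  rcases hk with rfl | rfl | rfl | rfl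
  · exact H.x_ne
  · exact H.invx.x_ne
  · exact H.y_ne
  · exact H.invy.y_ne

theorem nc_nil (H : Setup S n x y) {k : G} (hk : LegalMove S [] k) :
    ¬ ClosesCycle [] k := by
  rw [closes_iff, vis_nil]
  simpa [eval] using H.letter_ne hk.1

theorem nc_one (H : Setup S n x y) {p k : G} (hk : LegalMove S [p] k) :
    ¬ ClosesCycle [p] k := by
  have h1 := H.letter_ne hk.1
  rw [legal_cons] at hk
  rw [closes_iff, vis_cons, vis_nil]
  simpa [eval, h1] using hk.2

theorem nc_two (H : Setup S n x y) {p q k : G} (hk : LegalMove S [p, q] k)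
    (h3 : q * p * k ≠ 1) :
    ¬ ClosesCycle [p, q] k := by
  have h1 := H.letter_ne hk.1
  rw [legal_cons] at hk
  rw [closes_iff, vis_cons, vis_cons, vis_nil]
  simp only [eval, List.reverse_cons, List.reverse_nil, List.nil_append, List.prod_cons,
    List.prod_nil, List.cons_append, mul_one, one_mul]
  rintro (h | h | h)
  · exact h1 (by simpa using h)
  · rw [mul_assoc] at h
    exact hk.2 (by simpa using h)
  · exact h3 h

theorem good_nil0 (H : Setup S n x y) (h : n % 4 = 0) : ∃ N, Good S N [] := by
  have hP : Par n 0 0 n := Or.inl ⟨h, rfl, rfl, rfl⟩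
  refine ⟨(n - 1).toNat + 1, fun k hk => ⟨nc_nil H hk, ?_⟩⟩
  rcases (H.lett k).1 hk.1 with rfl | rfl | rfl | rfl
  · exact ⟨_, enter H hP [] _ _ (Or.inl ⟨rfl, rfl⟩) (by simp) weak_nil⟩
  · exact ⟨_, enter H.invx hP [] _ _ (Or.inl ⟨rfl, rfl⟩) (by simp) weak_nil⟩
  · exact ⟨_, enter H hP [] _ _ (Or.inr ⟨rfl, rfl⟩) (by simp) weak_nil⟩
  · exact ⟨_, enter H.invy hP [] _ _ (Or.inr ⟨rfl, rfl⟩) (by simp) weak_nil⟩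

theorem good_x (H : Setup S n x y) (h : n % 4 = 1) : ∃ N, Good S N [x] := by
  have hP : Par n 1 0 (n - 1) := Or.inr (Or.inl ⟨h, rfl, rfl, rfl⟩)
  refine ⟨(n - 1 - 1).toNat + 1, fun k hk => ⟨nc_one H hk, ?_⟩⟩
  rcases (H.lett k).1 hk.1 with rfl | rfl | rfl | rfl
  · exact ⟨_, enter H hP _ _ _ (Or.inl ⟨rfl, rfl⟩) (by simp) weak_x⟩
  · exact absurd hk (by simp [legal_cons])
  · exact ⟨_, enter H hP _ _ _ (Or.inr ⟨rfl, rfl⟩) (by simp) weak_x⟩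
  · exact ⟨_, enter H.invy hP _ _ _ (Or.inr ⟨rfl, rfl⟩) (by simp) weak_x⟩

theorem good_y (H : Setup S n x y) (h : n % 4 = 3) : ∃ N, Good S N [y] := by
  have hP : Par n 0 1 n := Or.inr (Or.inr (Or.inr (Or.inr ⟨h, rfl, rfl, rfl⟩)))
  refine ⟨(n - 1).toNat + 1, fun k hk => ⟨nc_one H hk, ?_⟩⟩
  rcases (H.lett k).1 hk.1 with rfl | rfl | rfl | rfl
  · exact ⟨_, enter H hP _ _ _ (Or.inl ⟨rfl, rfl⟩) (by simp) weak_y⟩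
  · exact ⟨_, enter H.invx hP _ _ _ (Or.inl ⟨rfl, rfl⟩) (by simp) weak_y⟩
  · exact ⟨_, enter H hP _ _ _ (Or.inr ⟨rfl, rfl⟩) (by simp) weak_y⟩
  · exact absurd hk (by simp [legal_cons])

theorem good_xx (H : Setup S n x y) (h : n % 4 = 2) :
    Good S ((n - 2 - 1).toNat + 1) [x, x] := by
  have hP : Par n 2 0 (n - 2) := Or.inr (Or.inr (Or.inl ⟨h, rfl, rfl, rfl⟩))
  intro k hk
  have hn := H.hn
  rcases (H.lett k).1 hk.1 with rfl | rfl | rfl | rfl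
  · refine ⟨nc_two H hk ?_,
      ⟨_, enter H hP _ _ _ (Or.inl ⟨rfl, rfl⟩) (by simp) weak_xx⟩⟩
    have := H.ne_of 3 0 (fun h' => by have := Int.le_of_dvd (by norm_num) h'.1; omega)
    simpa [zpow_ofNat, pow_succ] using this
  · exact absurd hk (by simp [legal_cons])
  · refine ⟨nc_two H hk ?_,
      ⟨_, enter H hP _ _ _ (Or.inr ⟨rfl, rfl⟩) (by simp) weak_xx⟩⟩
    have := H.ne_of 2 1 (by omega)
    simpa [zpow_ofNat, pow_succ] using this
  · refine ⟨nc_two H hk ?_,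
      ⟨_, enter H.invy hP _ _ _ (Or.inr ⟨rfl, rfl⟩) (by simp) weak_xx⟩⟩
    have := H.ne_of 2 (-1) (by omega)
    simpa [zpow_ofNat, pow_succ] using this

theorem good_yy (H : Setup S n x y) (h : n % 4 = 2) :
    Good S ((n - 1).toNat + 1) [y, y] := by
  have hP : Par n 0 2 n := Or.inr (Or.inr (Or.inr (Or.inl ⟨h, rfl, rfl, rfl⟩)))
  intro k hk
  have hn := H.hn
  rcases (H.lett k).1 hk.1 with rfl | rfl | rfl | rfl
  · refine ⟨nc_two H hk ?_,
      ⟨_, enter H hP _ _ _ (Or.inl ⟨rfl, rfl⟩) (by simp) weak_yy⟩⟩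
    have := H.ne_of 1 2 (by omega)
    rw [mul_comm]
    simpa [zpow_ofNat, pow_succ] using this
  · refine ⟨nc_two H hk ?_,
      ⟨_, enter H.invx hP _ _ _ (Or.inl ⟨rfl, rfl⟩) (by simp) weak_yy⟩⟩
    have := H.ne_of (-1) 2 (by omega)
    rw [mul_comm]
    simpa [zpow_ofNat, pow_succ] using this
  · refine ⟨nc_two H hk ?_, ⟨k, ?_, Or.inl ?_⟩⟩
    · have := H.ne_of 0 3 (by omega)
      simpa [zpow_ofNat, pow_succ] using this
    · rw [legal_cons]
      exact ⟨hk.1, H.yy_ne⟩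
    · rw [closes_iff]
      have := (H.rel 0 4).2 (by simp)
      have e : eval [k, k, k] * k = 1 := by
        simpa [eval, zpow_ofNat, pow_succ, mul_assoc] using this
      rw [e]
      exact vis_one _
  · exact absurd hk (by simp [legal_cons])

theorem good_mono (N : ℕ) : ∀ (M : ℕ) (h : List G), N ≤ M → Good S N h → Good S M h := by
  induction N with
  | zero => intro M h _ hg; exact absurd hg (by simp [Good])
  | succ N ih =>
    intro M h hM hg
    obtain ⟨M, rfl⟩ : ∃ M', M = M' + 1 := ⟨M - 1, by omega⟩
    intro k hk
    obtain ⟨h1, r, h2, h3⟩ := hg k hk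
    exact ⟨h1, r, h2, h3.imp_right (ih M _ (by omega))⟩

theorem good_nil2 (H : Setup S n x y) (h : n % 4 = 2) : ∃ N, Good S N [] := by
  have hx : ∀ {x y : G}, Setup S n x y → LegalMove S [x] x ∧
      (ClosesCycle [x] x ∨ Good S ((n - 1).toNat + 1) [x, x]) := by
    intro x y H
    exact ⟨by rw [legal_cons, H.lett]; exact ⟨by simp, H.xx_ne⟩,
      Or.inr (good_mono _ _ _ (by omega) (good_xx H h))⟩
  have hy : ∀ {x y : G}, Setup S n x y → LegalMove S [y] y ∧
      (ClosesCycle [y] y ∨ Good S ((n - 1).toNat + 1) [y, y]) := by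
    intro x y H
    exact ⟨by rw [legal_cons, H.lett]; exact ⟨by simp, H.yy_ne⟩, Or.inr (good_yy H h)⟩
  refine ⟨(n - 1).toNat + 1 + 1, fun k hk => ⟨nc_nil H hk, k, ?_⟩⟩
  rcases (H.lett k).1 hk.1 with rfl | rfl | rfl | rfl
  · exact hx H
  · exact hx H.invx
  · exact hy H
  · exact hy H.invy

theorem setup_main (n : ℕ) (hn : 3 ≤ n) :
    Setup ({Multiplicative.ofAdd ((1, 0) : ZMod n × ZMod 4),
            Multiplicative.ofAdd ((0, 1) : ZMod n × ZMod 4)} :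
          Set (Multiplicative (ZMod n × ZMod 4))) (n : ℤ)
      (Multiplicative.ofAdd ((1, 0) : ZMod n × ZMod 4))
      (Multiplicative.ofAdd ((0, 1) : ZMod n × ZMod 4)) where
  rel i j := by
    rw [← ofAdd_zsmul, ← ofAdd_zsmul, ← ofAdd_add, ofAdd_eq_one, Prod.ext_iff]
    have h4 := ZMod.intCast_zmod_eq_zero_iff_dvd j 4
    simp only [Prod.fst_add, Prod.snd_add, Prod.smul_mk, smul_zero, zsmul_one, add_zero, zero_add,
      Prod.fst_zero, Prod.snd_zero, ZMod.intCast_zmod_eq_zero_iff_dvd i n]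
    exact and_congr_right fun _ => h4
  lett m := by
    simp only [letters, Set.mem_union, Set.mem_insert_iff, Set.mem_singleton_iff,
      Set.image_insert_eq, Set.image_singleton]
    tauto
  hn := by exact_mod_cast hn

end RelatorGames

open RelatorGames in
/-- In `REL(ℤ_n × ℤ_4, {(1,0),(0,1)})` with `n ≥ 3`: Player 1 wins
if `n ≡ ±1 (mod 4)`, and Player 2 wins if `n ≡ 0` or `2 (mod 4)`. -/
theorem rel_product_cyclic_z4 (n : ℕ) (hn : 3 ≤ n) :
    ((n % 4 = 1 ∨ n % 4 = 3) →
      FirstWinsREL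
        ({Multiplicative.ofAdd ((1, 0) : ZMod n × ZMod 4),
            Multiplicative.ofAdd ((0, 1) : ZMod n × ZMod 4)} :
          Set (Multiplicative (ZMod n × ZMod 4)))) ∧
    ((n % 4 = 0 ∨ n % 4 = 2) →
      SecondWinsREL
        ({Multiplicative.ofAdd ((1, 0) : ZMod n × ZMod 4),
            Multiplicative.ofAdd ((0, 1) : ZMod n × ZMod 4)} :
          Set (Multiplicative (ZMod n × ZMod 4)))) := by
  have H := setup_main n hn
  refine ⟨?_, ?_⟩
  · rintro (h | h)
    · obtain ⟨N, hN⟩ := good_x H (by omega)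
      exact first_wins _ N _ ⟨(H.lett _).2 (by simp), by simp⟩ hN
    · obtain ⟨N, hN⟩ := good_y H (by omega)
      exact first_wins _ N _ ⟨(H.lett _).2 (by simp), by simp⟩ hN
  · rintro (h | h)
    · obtain ⟨N, hN⟩ := good_nil0 H (by omega)
      exact second_wins _ N hN
    · obtain ⟨N, hN⟩ := good_nil2 H (by omega)
      exact second_wins _ N hN
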